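/- arXiv:2604.19506 — 6 statements merged into one kernel-verified Lean document; each statement's English description precedes it below -/
import Mathlib

section
/- Let f, g : ℝ → ℝ be twice continuously differentiable on a neighborhood of z₀ ∈ ℝ and let ξ₀ ∈ ℝ. Suppose there exist sequences (ξ_k) in ℝ with ξ_k → ξ₀ and sequences (a_k), (b_k) in ℝ with a_k ≠ b_k for all k, a_k → z₀, b_k → z₀, and ξ_k·f'(a_k) + g'(a_k) = 0 and ξ_k·f'(b_k) + g'(b_k) = 0 for all k. Then ξ₀·f'(z₀) + g'(z₀) = 0 and ξ₀·f''(z₀) + g''(z₀) = 0. -/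
/-!
Since `f'` and `g'` are `C¹` near `z₀`, they are strictly differentiable at `z₀`, so their
difference quotients along the pairs `(a k, b k)` converge to `f''(z₀)` and `g''(z₀)`
(`tendsto_divided_difference`). Subtracting the two stationarity equations and dividing by
`a k - b k ≠ 0` shows that `ξ k` times the quotient of `f'` plus the quotient of `g'` is
identically zero; the limit of this identity is the second claim. The first claim is the limit of
the stationarity equation itself.
-/

open Filter

/-- Strict differentiability controls difference quotients with both endpoints moving. -/
lemma tendsto_divided_difference {h : ℝ → ℝ} {h' z : ℝ} (hh : HasStrictDerivAt h h' z)
    {a b : ℕ → ℝ} (hab : ∀ k, a k ≠ b k)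
    (ha : Tendsto a atTop (nhds z)) (hb : Tendsto b atTop (nhds z)) :
    Tendsto (fun k => (h (a k) - h (b k)) / (a k - b k)) atTop (nhds h') := by
  have hp : Tendsto (fun k => (a k, b k)) atTop (nhds (z, z)) := ha.prodMk_nhds hb
  have ho := (hh.hasStrictFDerivAt.isLittleO.comp_tendsto hp).tendsto_div_nhds_zero
  have h2 := ho.add_const h'
  rw [zero_add] at h2
  refine h2.congr fun k => ?_
  have hk : a k - b k ≠ 0 := sub_ne_zero.mpr (hab k)
  simp
  field_simp
  ring

/-- Converse direction of the collision lemma: if two distinct stationary phase points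
of `θ(z;ξ) = ξ·f(z) + g(z)` coalesce at `z₀` as `ξ → ξ₀`, then both the first and the
second `z`-derivative of the phase vanish at `(z₀, ξ₀)`. -/
theorem stmt_1 (f g : ℝ → ℝ) (z₀ ξ₀ r : ℝ) (hr : 0 < r)
    (hf : ContDiffOn ℝ 2 f (Metric.ball z₀ r))
    (hg : ContDiffOn ℝ 2 g (Metric.ball z₀ r))
    (ξ a b : ℕ → ℝ)
    (hξ : Tendsto ξ atTop (nhds ξ₀))
    (hab : ∀ k, a k ≠ b k)
    (ha : Tendsto a atTop (nhds z₀))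
    (hb : Tendsto b atTop (nhds z₀))
    (hza : ∀ k, ξ k * deriv f (a k) + deriv g (a k) = 0)
    (hzb : ∀ k, ξ k * deriv f (b k) + deriv g (b k) = 0) :
    ξ₀ * deriv f z₀ + deriv g z₀ = 0 ∧
    ξ₀ * deriv (deriv f) z₀ + deriv (deriv g) z₀ = 0 := by
  have key : ∀ {h : ℝ → ℝ}, ContDiffOn ℝ 2 h (Metric.ball z₀ r) →
      HasStrictDerivAt (deriv h) (deriv (deriv h) z₀) z₀ := fun hh =>
    ((hh.deriv_of_isOpen (m := 1) Metric.isOpen_ball (by norm_num)).contDiffAt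
      (Metric.ball_mem_nhds z₀ hr)).hasStrictDerivAt one_ne_zero
  have hf' := key hf
  have hg' := key hg
  constructor
  · have hlim := (hξ.mul (hf'.hasDerivAt.continuousAt.tendsto.comp ha)).add
      (hg'.hasDerivAt.continuousAt.tendsto.comp ha)
    exact tendsto_nhds_unique (hlim.congr hza) tendsto_const_nhds
  · have hlim := (hξ.mul (tendsto_divided_difference hf' hab ha hb)).add
      (tendsto_divided_difference hg' hab ha hb)
    refine tendsto_nhds_unique (hlim.congr fun k => ?_) tendsto_const_nhds
    have hk : a k - b k ≠ 0 := sub_ne_zero.mpr (hab k)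
    field_simp
    linear_combination hza k - hzb k
end

section
/- Let n ∈ ℕ, let E : Fin (n+1) → ℂ with E_k = B_k + i·A_k (B_k, A_k ∈ ℝ), let κ : Fin (n+2) → ℂ, and let ξ ∈ ℝ. Define the polynomials P(X) = ∏_{k} (X − E_k)(X − conj(E_k)) and h(X) = 4·∏_{j} (X − κ_j), and set ℬ = ∑_k B_k, 𝒦₁ = ∑_j κ_j, 𝒦₂ = ∑_{i<j} κ_i·κ_j. If the polynomial h² − (4X + ξ)²·P has degree at most 2n + 1, then 𝒦₁ = ℬ − ξ/4 and 𝒦₂ − 𝒦₁·ℬ + (1/2)·(ℬ² + ∑_k (B_k² − A_k²)) = 0. -/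
/-!
After division by `16`, both `h²` and `(4X + ξ)²P` are monic of degree `2n + 4`: the first has each
`κⱼ` as a root twice, the second has the double root `-ξ/4` and the roots `Eₖ`, `conj Eₖ`. The
degree bound says that their coefficients of `X ^ (2n + 3)` and `X ^ (2n + 2)` agree. By Vieta and
Newton these two coefficients determine the sum of the roots and the sum of their squares
(`coeff_X_sq_mul_prod`, `powerSums_eq`), so

* `2 ∑ κⱼ = -ξ/2 + 2 ∑ Bₖ`,
* `2 ∑ κⱼ² = ξ²/8 + 2 ∑ (Bₖ² - Aₖ²)`.

Together with `2𝒦₂ = 𝒦₁² - ∑ κⱼ²` (`two_mul_sum_lt`) these are the two moment conditions.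
-/


open Polynomial Finset

/-- The three top coefficients of `∏ (X - a)` in terms of the first two power sums of the roots.
The factor `X ^ 2` shifts the indices so that no truncated subtraction occurs for fewer than two
roots. -/
lemma coeff_X_sq_mul_prod (M : Multiset ℂ) :
    (∀ k, M.card + 2 < k → (X ^ 2 * (M.map fun a => X - C a).prod : ℂ[X]).coeff k = 0) ∧
    (X ^ 2 * (M.map fun a => X - C a).prod : ℂ[X]).coeff (M.card + 2) = 1 ∧
    (X ^ 2 * (M.map fun a => X - C a).prod : ℂ[X]).coeff (M.card + 1) = -M.sum ∧
    2 * (X ^ 2 * (M.map fun a => X - C a).prod : ℂ[X]).coeff M.card =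
      M.sum ^ 2 - (M.map fun a => a ^ 2).sum := by
  induction M using Multiset.induction_on with
  | empty =>
    simp only [Multiset.map_zero, Multiset.prod_zero, mul_one, Multiset.card_zero, coeff_X_pow]
    refine ⟨fun k hk => if_neg (by omega), by simp, by simp, by simp⟩
  | cons a M ih =>
    obtain ⟨h0, h1, h2, h3⟩ := ih
    simp only [Multiset.map_cons, Multiset.prod_cons, Multiset.card_cons, Multiset.sum_cons]
    rw [mul_left_comm]
    generalize X ^ 2 * (M.map fun a => X - C a).prod = q at *
    have step (k : ℕ) : ((X - C a) * q).coeff (k + 1) = q.coeff k - a * q.coeff (k + 1) := by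
      rw [sub_mul, coeff_sub, coeff_X_mul, coeff_C_mul]
    refine ⟨fun k hk => ?_, ?_, ?_, ?_⟩
    · obtain ⟨k, rfl⟩ := Nat.exists_eq_add_of_lt (Nat.zero_lt_of_lt hk)
      rw [zero_add, step, h0 k (by omega), h0 (k + 1) (by omega)]
      ring
    · rw [show M.card + 1 + 2 = M.card + 2 + 1 by ring, step, h1, h0 _ (by omega)]
      ring
    · rw [step, h2, h1]
      ring
    · rw [step, h2]
      linear_combination h3

/-- If two monic polynomials of degree `d + 2` differ by a polynomial of degree less than `d`, then
their roots have the same sum and the same sum of squares. -/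
lemma powerSums_eq (M M' : Multiset ℂ) (d : ℕ) (hM : M.card = d + 2) (hM' : M'.card = d + 2)
    (h : ((M.map fun a => X - C a).prod - (M'.map fun a => X - C a).prod : ℂ[X]).degree < d) :
    M.sum = M'.sum ∧ (M.map fun a => a ^ 2).sum = (M'.map fun a => a ^ 2).sum := by
  obtain ⟨-, -, h2, h3⟩ := coeff_X_sq_mul_prod M
  obtain ⟨-, -, h2', h3'⟩ := coeff_X_sq_mul_prod M'
  have shift (p : ℂ[X]) (k : ℕ) : (X ^ 2 * p).coeff (k + 2) = p.coeff k := coeff_X_pow_mul p 2 k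
  have agree (k : ℕ) (hk : d ≤ k) :
      (M.map fun a => X - C a).prod.coeff k = (M'.map fun a => X - C a).prod.coeff k := by
    rw [← sub_eq_zero, ← coeff_sub]
    exact coeff_eq_zero_of_degree_lt (h.trans_le (by exact_mod_cast hk))
  rw [hM, show d + 2 + 1 = d + 1 + 2 by ring, shift] at h2
  rw [hM', show d + 2 + 1 = d + 1 + 2 by ring, shift] at h2'
  rw [hM, shift] at h3
  rw [hM', shift] at h3'
  have hs : M.sum = M'.sum := by linear_combination h2 - h2' - agree (d + 1) (by omega)
  refine ⟨hs, ?_⟩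
  rw [hs] at h3
  linear_combination h3 - h3' - 2 * agree d le_rfl

/-- Newton's identity `2 e₂ = p₁² - p₂`, with `e₂` written as a sum over ordered pairs. -/
lemma two_mul_sum_lt (m : ℕ) (f : Fin m → ℂ) :
    2 * ∑ p ∈ Finset.univ.filter (fun p : Fin m × Fin m => p.1 < p.2), f p.1 * f p.2 =
      (∑ j, f j) ^ 2 - ∑ j, f j ^ 2 := by
  have hswap : ∑ i, ∑ j, (if j < i then f i * f j else 0) =
      ∑ i, ∑ j, (if i < j then f i * f j else 0) := by
    rw [Finset.sum_comm]
    simp only [mul_comm]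
  have hdiag : ∑ j, f j ^ 2 = ∑ i, ∑ j, (if i = j then f i * f j else 0) := by
    simp [sq]
  rw [Finset.sum_filter, Fintype.sum_prod_type, two_mul]
  nth_rewrite 2 [← hswap]
  rw [hdiag, sq, Finset.sum_mul_sum, eq_sub_iff_add_eq]
  simp only [← Finset.sum_add_distrib]
  refine Finset.sum_congr rfl fun i _ => Finset.sum_congr rfl fun j _ => ?_
  rcases lt_trichotomy i j with hij | rfl | hij
  · simp [hij, hij.not_gt, hij.ne]
  · simp
  · simp [hij, hij.not_gt, hij.ne']

/-- The moment conditions on the stationary phase points: if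
`h(X)² − (4X + ξ)²·P(X)` has degree at most `2n+1`, where
`P(X) = ∏ₖ (X − Eₖ)(X − conj Eₖ)` and `h(X) = 4·∏ⱼ (X − κⱼ)`, then the first and
second elementary symmetric functions of the `κⱼ` satisfy
`𝒦₁ = ℬ − ξ/4` and `𝒦₂ − 𝒦₁ℬ + ½(ℬ² + ∑ₖ(Bₖ² − Aₖ²)) = 0`. -/
theorem stmt_4 (n : ℕ) (E : Fin (n + 1) → ℂ) (B A : Fin (n + 1) → ℝ)
    (hE : ∀ k, E k = (B k : ℂ) + Complex.I * (A k : ℂ))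
    (κ : Fin (n + 2) → ℂ) (ξ : ℝ)
    (hdeg :
      ((C 4 * ∏ j, (X - C (κ j))) ^ 2 -
          (C 4 * X + C (ξ : ℂ)) ^ 2 *
            ∏ k, ((X - C (E k)) * (X - C (starRingEnd ℂ (E k))))).degree
        ≤ ((2 * n + 1 : ℕ) : WithBot ℕ)) :
    (∑ j, κ j) = ((∑ k, B k : ℝ) : ℂ) - (ξ : ℂ) / 4 ∧
    (∑ p ∈ Finset.univ.filter (fun p : Fin (n + 2) × Fin (n + 2) => p.1 < p.2),
        κ p.1 * κ p.2)
      - (∑ j, κ j) * ((∑ k, B k : ℝ) : ℂ)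
      + (1 / 2) * (((∑ k, B k : ℝ) : ℂ) ^ 2 + ((∑ k, ((B k) ^ 2 - (A k) ^ 2) : ℝ) : ℂ))
      = 0 := by
  have hlin : (C 4 * X + C (ξ : ℂ) : ℂ[X]) = C 4 * (X - C (-(ξ : ℂ) / 4)) := by
    rw [mul_sub, ← C_mul, sub_eq_add_neg, ← C_neg]
    congr 2
    ring
  have hfac (a b c d : ℂ[X]) : (C 4 * a) ^ 2 - (C 4 * b) ^ 2 * (c * d) =
      C 16 * (a * a - b * (b * (c * d))) := by
    rw [show (16 : ℂ) = 4 * 4 by norm_num, C_mul]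
    ring
  have hlt : ((2 * n + 1 : ℕ) : WithBot ℕ) < ((2 * n + 2 : ℕ) : WithBot ℕ) :=
    WithBot.coe_lt_coe.2 (Nat.lt_succ_self _)
  rw [hlin, Finset.prod_mul_distrib, hfac, degree_C_mul (by norm_num)] at hdeg
  have hval {m : ℕ} (f : Fin m → ℂ) :
      ((Finset.univ.val.map f).map fun a => X - C a).prod = ∏ j, (X - C (f j)) := by
    rw [Multiset.map_map]
    rfl
  have hsqval {m : ℕ} (f : Fin m → ℂ) :
      ((Finset.univ.val.map f).map fun a => a ^ 2).sum = ∑ j, f j ^ 2 := by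
    rw [Multiset.map_map]
    rfl
  have hcard {m : ℕ} (f : Fin m → ℂ) : (Finset.univ.val.map f).card = m := by
    rw [Multiset.card_map, Finset.card_val, Finset.card_fin]
  obtain ⟨hp1, hp2⟩ := powerSums_eq (Finset.univ.val.map κ + Finset.univ.val.map κ)
    (-(ξ : ℂ) / 4 ::ₘ -(ξ : ℂ) / 4 ::ₘ
      (Finset.univ.val.map E + Finset.univ.val.map fun k => starRingEnd ℂ (E k))) (2 * n + 2)
    (by rw [Multiset.card_add, hcard]; ring)
    (by rw [Multiset.card_cons, Multiset.card_cons, Multiset.card_add, hcard, hcard]; ring)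
    (by
      simp only [Multiset.map_add, Multiset.prod_add, Multiset.map_cons, Multiset.prod_cons, hval]
      exact hdeg.trans_lt hlt)
  have hsum : ∑ k, E k + ∑ k, starRingEnd ℂ (E k) = 2 * ∑ k, (B k : ℂ) := by
    rw [← Finset.sum_add_distrib, Finset.mul_sum]
    refine Finset.sum_congr rfl fun k _ => ?_
    simp only [hE, map_add, map_mul, Complex.conj_ofReal, Complex.conj_I]
    ring
  have hsq : ∑ k, E k ^ 2 + ∑ k, starRingEnd ℂ (E k) ^ 2 =
      2 * ∑ k, ((B k : ℂ) ^ 2 - (A k : ℂ) ^ 2) := by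
    rw [← Finset.sum_add_distrib, Finset.mul_sum]
    refine Finset.sum_congr rfl fun k _ => ?_
    simp only [hE, map_add, map_mul, Complex.conj_ofReal, Complex.conj_I]
    linear_combination 2 * (A k : ℂ) ^ 2 * Complex.I_sq
  have hp1' : ∑ j, κ j + ∑ j, κ j =
      -(ξ : ℂ) / 4 + -(ξ : ℂ) / 4 + (∑ k, E k + ∑ k, starRingEnd ℂ (E k)) := by
    simpa only [Multiset.sum_add, Multiset.sum_cons, Finset.sum_map_val, add_assoc] using hp1
  have hp2' : ∑ j, κ j ^ 2 + ∑ j, κ j ^ 2 =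
      (-(ξ : ℂ) / 4) ^ 2 + (-(ξ : ℂ) / 4) ^ 2 +
        (∑ k, E k ^ 2 + ∑ k, starRingEnd ℂ (E k) ^ 2) := by
    simpa only [Multiset.map_add, Multiset.map_cons, Multiset.sum_add, Multiset.sum_cons, hsqval,
      add_assoc] using hp2
  have hN := two_mul_sum_lt (n + 2) κ
  push_cast
  rw [hsum] at hp1'
  rw [hsq] at hp2'
  have h1 : ∑ j, κ j = ∑ k, (B k : ℂ) - (ξ : ℂ) / 4 := by linear_combination hp1' / 2
  refine ⟨h1, ?_⟩
  rw [h1] at hN ⊢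
  linear_combination hN / 2 - hp2' / 4
end

section
/- Let f : ℝ → ℂ be integrable and bounded, and suppose f is continuous at the point x ∈ ℝ. Then lim_{ε → 0⁺} (1/(2πi)) · ∫_ℝ f(s) · ( 1/(s − (x + iε)) − 1/(s − (x − iε)) ) ds = f(x). -/
/-!
The difference of the two Cauchy kernels is `2πi` times the Poisson kernel
`π⁻¹ ε / ((s - x)² + ε²)`. With `c = ε⁻¹` this is the rescaling `c * φ (c * (x - s))` of
the Cauchy density `φ y = π⁻¹ (1 + y²)⁻¹`, which is nonnegative, has integral one and satisfies
`|y| * φ y → 0` at infinity. Hence the kernels form an approximate identity, and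
`tendsto_integral_comp_smul_smul_of_integrable'` gives the limit for any integrable function
continuous at `x`.
-/

open MeasureTheory Filter

lemma tendsto_norm_mul_cauchyDensity :
    Tendsto (fun y : ℝ => ‖y‖ ^ Module.finrank ℝ ℝ * (Real.pi⁻¹ * (1 + y ^ 2)⁻¹))
      (Bornology.cobounded ℝ) (nhds 0) := by
  have h : Tendsto (fun y : ℝ => ‖y‖⁻¹) (Bornology.cobounded ℝ) (nhds 0) :=
    tendsto_inv_atTop_zero.comp tendsto_norm_cobounded_atTop
  refine squeeze_zero (fun y => by positivity) (fun y => ?_) h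
  rw [Module.finrank_self, pow_one, Real.norm_eq_abs]
  rcases eq_or_ne y 0 with rfl | hy
  · simp
  · have hy' : 0 < |y| := abs_pos.mpr hy
    have hpi : Real.pi⁻¹ ≤ 1 := inv_le_one_of_one_le₀ (by linarith [Real.pi_gt_three])
    calc |y| * (Real.pi⁻¹ * (1 + y ^ 2)⁻¹)
        ≤ |y| * (1 * (|y| ^ 2)⁻¹) := by
          rw [sq_abs]
          gcongr
          linarith
      _ = |y|⁻¹ := by field_simp

/-- The normalized difference of Cauchy kernels is the Poisson kernel, written as a rescaling of
the Cauchy density. -/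
lemma cauchyKernel_sub_eq (x s ε : ℝ) (hε : 0 < ε) :
    1 / (2 * (Real.pi : ℂ) * Complex.I) *
        (1 / ((s : ℂ) - ((x : ℂ) + Complex.I * (ε : ℂ)))
          - 1 / ((s : ℂ) - ((x : ℂ) - Complex.I * (ε : ℂ))))
      = ((ε⁻¹ * (Real.pi⁻¹ * (1 + (ε⁻¹ * (x - s)) ^ 2)⁻¹) : ℝ) : ℂ) := by
  have h1 : (s : ℂ) - ((x : ℂ) + Complex.I * (ε : ℂ)) ≠ 0 := fun h => by
    have := congrArg Complex.im h
    simp at this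
    exact hε.ne' this
  have h2 : (s : ℂ) - ((x : ℂ) - Complex.I * (ε : ℂ)) ≠ 0 := fun h => by
    have := congrArg Complex.im h
    simp at this
    exact hε.ne' this
  have hpos : 0 < ε ^ 2 + (x - s) ^ 2 := by positivity
  have h3 : (ε : ℂ) ^ 2 + ((x : ℂ) - s) ^ 2 ≠ 0 := by exact_mod_cast hpos.ne'
  have hεc : (ε : ℂ) ≠ 0 := by exact_mod_cast hε.ne'
  have hpi : (Real.pi : ℂ) ≠ 0 := by exact_mod_cast Real.pi_ne_zero
  have hR : ε⁻¹ * (Real.pi⁻¹ * (1 + (ε⁻¹ * (x - s)) ^ 2)⁻¹)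
      = ε / (Real.pi * (ε ^ 2 + (x - s) ^ 2)) := by
    field_simp
  have hprod : ((s : ℂ) - ((x : ℂ) + Complex.I * (ε : ℂ))) *
      ((s : ℂ) - ((x : ℂ) - Complex.I * (ε : ℂ))) = (ε : ℂ) ^ 2 + ((x : ℂ) - s) ^ 2 := by
    linear_combination (-(ε : ℂ) ^ 2) * Complex.I_sq
  rw [hR, div_sub_div _ _ h1 h2, hprod]
  push_cast
  field_simp
  ring

/-- Sokhotski–Plemelj jump relation: for `f : ℝ → ℂ` integrable and bounded and
continuous at `x`, the difference of the upper and lower boundary values of the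
Cauchy transform at `x` recovers `f(x)`:
`lim_{ε→0⁺} (1/(2πi)) ∫ f(s)·(1/(s−(x+iε)) − 1/(s−(x−iε))) ds = f(x)`. -/
theorem stmt_8 (f : ℝ → ℂ) (hf : Integrable f) (Cb : ℝ) (hbd : ∀ s : ℝ, ‖f s‖ ≤ Cb)
    (x : ℝ) (hcont : ContinuousAt f x) :
    Tendsto (fun ε : ℝ =>
        (1 / (2 * (Real.pi : ℂ) * Complex.I)) *
          ∫ s : ℝ, f s *
            (1 / ((s : ℂ) - ((x : ℂ) + Complex.I * (ε : ℂ)))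
              - 1 / ((s : ℂ) - ((x : ℂ) - Complex.I * (ε : ℂ)))))
      (nhdsWithin 0 (Set.Ioi 0)) (nhds (f x)) := by
  have hint : ∫ y : ℝ, Real.pi⁻¹ * (1 + y ^ 2)⁻¹ = 1 := by
    rw [integral_const_mul, integral_univ_inv_one_add_sq, inv_mul_cancel₀ Real.pi_ne_zero]
  have key := (tendsto_integral_comp_smul_smul_of_integrable' (μ := volume)
    (φ := fun y : ℝ => Real.pi⁻¹ * (1 + y ^ 2)⁻¹) (fun y => by positivity) hint
    tendsto_norm_mul_cauchyDensity hf hcont).comp tendsto_inv_nhdsGT_zero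
  refine key.congr' ?_
  filter_upwards [self_mem_nhdsWithin] with ε hε
  rw [← integral_const_mul]
  refine integral_congr_ae (Eventually.of_forall fun s => ?_)
  simp only [Module.finrank_self, pow_one, smul_eq_mul, Complex.real_smul]
  rw [← cauchyKernel_sub_eq x s ε hε]
  ring
end

section
/- Let n ∈ ℕ, let P be a monic polynomial of degree 2n + 2 with complex coefficients with p the coefficient of z^{2n+1}, let R > 0, and let w be analytic on {|z| > R} with w(z)² = P(z) and w(z)/z^{n+1} → 1 as z → ∞. Let m : ℝ → ℂ be integrable with support contained in a compact set, define the moments M_k = ∫_ℝ s^k·m(s) ds, and assume M₀ = M₁ = ⋯ = M_{n−1} = 0. Define E(z) = (w(z)/(2πi)) · ∫_ℝ m(s)/(s − z) ds for |z| large. Then, setting E₀ = −M_n/(2πi) and E₁ = −( (p/2)·M_n + M_{n+1} )/(2πi), one has E(z) − E₀ − E₁/z = O(|z|^{−2}) as z → ∞. -/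
/-!
Write `u(z) = w(z) / z^(n+1)` and `J_k(z) = ∫ s^k m(s) / (s - z) ds`, so that
`2πi E(z) = u(z) · z^(n+1) J_0(z)`. The claim is the product of two expansions.

* `u² = P(z) / z^(2n+2) = 1 + p/z + O(z⁻²)` and `u → 1`. Since
  `(u - 1 - p/(2z)) (u + 1 + p/(2z)) = u² - (1 + p/(2z))²` and the second factor tends to `2`,
  it follows that `u = 1 + p/(2z) + O(z⁻²)` (`sqrt_expansion`).
* `s^(k+1)/(s - z) = s^k + z s^k/(s - z)` gives `J_(k+1) = M_k + z J_k` (`cauchy_succ`). With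
  `M_0 = ⋯ = M_(n-1) = 0` this yields `z^(n+1) J_0 = -M_n - M_(n+1)/z + J_(n+2)/z`, and
  `J_(n+2) = O(z⁻¹)` because the density has compact support (`cauchy_isBigO`).
-/

open Polynomial Filter Asymptotics MeasureTheory

theorem tendsto_inv_cocompact : Tendsto (fun z : ℂ => z⁻¹) (cocompact ℂ) (nhds 0) := by
  rw [← Metric.cobounded_eq_cocompact]
  exact tendsto_inv₀_cobounded

theorem eventually_lt_norm (A : ℝ) : ∀ᶠ z : ℂ in cocompact ℂ, A < ‖z‖ :=
  (tendsto_norm_cocompact_atTop (E := ℂ)).eventually_gt_atTop A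

/-- `P(z) / z^(2n+2) = 1 + p/z + O(z⁻²)` with `p` the subleading coefficient of `P`. -/
theorem polynomial_expansion (n : ℕ) (P : Polynomial ℂ) (hPm : P.Monic)
    (hPd : P.natDegree = 2 * n + 2) :
    (fun z : ℂ => P.eval z / z ^ (2 * n + 2) - 1 - P.coeff (2 * n + 1) * z⁻¹)
      =O[cocompact ℂ] fun z : ℂ => z⁻¹ ^ 2 := by
  -- The remainder is `z⁻²` times a polynomial in `z⁻¹`, which converges at infinity.
  set q : ℂ → ℂ := fun t => ∑ k ∈ Finset.range (2 * n + 1), P.coeff k * t ^ (2 * n - k) with hq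
  have hqc : Continuous q := by fun_prop
  have hb : (fun z : ℂ => q z⁻¹) =O[cocompact ℂ] fun _ => (1 : ℂ) :=
    ((hqc.tendsto 0).comp tendsto_inv_cocompact).isBigO_one ℂ
  have h2 := (isBigO_refl (fun z : ℂ => z⁻¹ ^ 2) (cocompact ℂ)).mul hb
  refine h2.congr' ?_ (by simp)
  filter_upwards [eventually_lt_norm 0] with z hz
  have hz : z ≠ 0 := norm_pos_iff.mp hz
  have hlead : P.coeff (2 * n + 2) = 1 := by rw [← hPd]; exact hPm
  rw [Polynomial.eval_eq_sum_range, hPd, Finset.sum_range_succ, Finset.sum_range_succ, hlead,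
    add_div, add_div, Finset.sum_div]
  have e1 : z⁻¹ ^ 2 * q z⁻¹
      = ∑ k ∈ Finset.range (2 * n + 1), P.coeff k * z ^ k / z ^ (2 * n + 2) := by
    rw [hq, Finset.mul_sum]
    refine Finset.sum_congr rfl fun k hk => ?_
    have hk : k ≤ 2 * n := by simpa [Nat.lt_succ_iff] using hk
    obtain ⟨j, hj⟩ := Nat.exists_eq_add_of_le hk
    rw [hj, Nat.add_sub_cancel_left, inv_pow, inv_pow]
    field_simp
    ring
  rw [e1]
  have e2 : P.coeff (2 * n + 1) * z ^ (2 * n + 1) / z ^ (2 * n + 2)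
      = P.coeff (2 * n + 1) * z⁻¹ := by
    rw [pow_succ z (2 * n + 1)]
    field_simp
  have e3 : 1 * z ^ (2 * n + 2) / z ^ (2 * n + 2) = 1 := by field_simp
  rw [e2, e3]
  ring

/-- Extraction of the square root: `u² = 1 + p/z + O(z⁻²)` and `u → 1` imply
`u = 1 + p/(2z) + O(z⁻²)`. -/
theorem sqrt_expansion (p : ℂ) (u : ℂ → ℂ) (hu : Tendsto u (cocompact ℂ) (nhds 1))
    (hu2 : (fun z : ℂ => u z ^ 2 - 1 - p * z⁻¹) =O[cocompact ℂ] fun z : ℂ => z⁻¹ ^ 2) :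
    (fun z : ℂ => u z - 1 - p / 2 * z⁻¹) =O[cocompact ℂ] fun z : ℂ => z⁻¹ ^ 2 := by
  have hv : Tendsto (fun z : ℂ => u z + 1 + p / 2 * z⁻¹) (cocompact ℂ) (nhds 2) := by
    have := (hu.add_const 1).add (tendsto_inv_cocompact.const_mul (p / 2))
    convert this using 2
    norm_num
  have hvi := (hv.inv₀ two_ne_zero).isBigO_one ℂ
  have h := (hu2.sub ((isBigO_refl (fun z : ℂ => z⁻¹ ^ 2) (cocompact ℂ)).const_mul_left
    (p ^ 2 / 4))).mul hvi
  refine h.congr' ?_ (by simp)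
  filter_upwards [hv.eventually_ne two_ne_zero] with z hz
  rw [mul_inv_eq_iff_eq_mul₀ hz]
  ring

section Density

variable {m : ℝ → ℂ} {A : ℝ}

theorem integrable_mul_of_bound (hm : Integrable m) (hA : ∀ s, m s ≠ 0 → |s| ≤ A)
    {f : ℝ → ℂ} (hf : Measurable f) {C : ℝ} (hC : ∀ s, |s| ≤ A → ‖f s‖ ≤ C) :
    Integrable fun s => f s * m s := by
  refine (hm.norm.const_mul C).mono' (hf.aestronglyMeasurable.mul hm.1) (ae_of_all _ fun s => ?_)
  by_cases h : m s = 0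
  · simp [h]
  · rw [norm_mul]
    exact mul_le_mul_of_nonneg_right (hC s (hA s h)) (norm_nonneg _)

theorem norm_pow_le_bound {s : ℝ} (hs : |s| ≤ A) (k : ℕ) : ‖(s : ℂ) ^ k‖ ≤ A ^ k := by
  rw [norm_pow, Complex.norm_real, Real.norm_eq_abs]
  gcongr

theorem half_norm_le {s : ℝ} (hs : |s| ≤ A) {z : ℂ} (hz : 2 * A < ‖z‖) :
    ‖z‖ / 2 ≤ ‖(s : ℂ) - z‖ := by
  have h := norm_sub_norm_le z (s : ℂ)
  rw [norm_sub_rev, Complex.norm_real, Real.norm_eq_abs] at h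
  linarith

theorem norm_pow_div_le {s : ℝ} (hA0 : 0 < A) (hs : |s| ≤ A) {z : ℂ} (hz : 2 * A < ‖z‖) (k : ℕ) :
    ‖(s : ℂ) ^ k / ((s : ℂ) - z)‖ ≤ A ^ k * (2 * ‖z‖⁻¹) := by
  have h1 := half_norm_le hs hz
  have hz0 : 0 < ‖z‖ := by linarith
  rw [norm_div]
  calc _ ≤ A ^ k / (‖z‖ / 2) := by gcongr; exact norm_pow_le_bound hs k
    _ = _ := by field_simp

/-- The recurrence `J_(k+1) = M_k + z J_k` for `J_k = ∫ s^k m(s) / (s - z) ds`. -/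
theorem cauchy_succ (hm : Integrable m) (hA0 : 0 < A) (hA : ∀ s, m s ≠ 0 → |s| ≤ A)
    {z : ℂ} (hz : 2 * A < ‖z‖) (k : ℕ) :
    ∫ s : ℝ, (s : ℂ) ^ (k + 1) / ((s : ℂ) - z) * m s
      = (∫ s : ℝ, (s : ℂ) ^ k * m s) + z * ∫ s : ℝ, (s : ℂ) ^ k / ((s : ℂ) - z) * m s := by
  have i1 : Integrable fun s : ℝ => (s : ℂ) ^ k * m s :=
    integrable_mul_of_bound hm hA (by fun_prop) fun s hs => norm_pow_le_bound hs k
  have i2 : Integrable fun s : ℝ => (s : ℂ) ^ k / ((s : ℂ) - z) * m s :=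
    integrable_mul_of_bound hm hA (by fun_prop) fun s hs => norm_pow_div_le hA0 hs hz k
  rw [← integral_const_mul, ← integral_add i1 (i2.const_mul z)]
  refine integral_congr_ae (ae_of_all _ fun s => ?_)
  by_cases h : m s = 0
  · simp [h]
  · have h1 : 0 < ‖(s : ℂ) - z‖ := by
      have := half_norm_le (hA s h) hz
      linarith
    have h2 : (s : ℂ) - z ≠ 0 := norm_pos_iff.mp h1
    field_simp
    ring

/-- `J_k(z) = O(z⁻¹)`: on the support of `m` one has `|s| ≤ A`, hence `|s - z| ≥ |z|/2` for
large `z`. -/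
theorem cauchy_isBigO (hA0 : 0 < A) (hm : Integrable m)
    (hA : ∀ s, m s ≠ 0 → |s| ≤ A) (k : ℕ) :
    (fun z : ℂ => ∫ s : ℝ, (s : ℂ) ^ k / ((s : ℂ) - z) * m s)
      =O[cocompact ℂ] fun z : ℂ => z⁻¹ := by
  refine IsBigO.of_bound (A ^ k * 2 * ∫ s, ‖m s‖) ?_
  filter_upwards [eventually_lt_norm (2 * A)] with z hz
  calc _ ≤ ∫ s, A ^ k * (2 * ‖z‖⁻¹) * ‖m s‖ := by
        refine norm_integral_le_of_norm_le (hm.norm.const_mul _) (ae_of_all _ fun s => ?_)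
        by_cases h : m s = 0
        · simp [h]
        · rw [norm_mul]
          exact mul_le_mul_of_nonneg_right (norm_pow_div_le hA0 (hA s h) hz k) (norm_nonneg _)
    _ = _ := by rw [integral_const_mul, norm_inv]; ring

end Density

/-- Large-`z` expansion of `E(z) = (w(z)/(2πi)) ∫ m(s)/(s−z) ds`, where `w` is the
branch of `√P` normalized by `w(z) ∼ z^{n+1}` at infinity (`P` monic of degree `2n+2`
with subleading coefficient `p`) and the compactly supported density `m` has vanishing
moments `M₀ = ⋯ = M_{n−1} = 0`: with `E₀ = −M_n/(2πi)` and
`E₁ = −((p/2)·M_n + M_{n+1})/(2πi)` one has `E(z) − E₀ − E₁/z = O(|z|^{−2})`. -/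
theorem stmt_11 (n : ℕ) (P : Polynomial ℂ) (hPm : P.Monic) (hPd : P.natDegree = 2 * n + 2)
    (R : ℝ) (hR : 0 < R) (w : ℂ → ℂ)
    (hw : AnalyticOnNhd ℂ w {z : ℂ | R < ‖z‖})
    (hw2 : ∀ z : ℂ, R < ‖z‖ → (w z) ^ 2 = P.eval z)
    (hlim : Tendsto (fun z : ℂ => w z / z ^ (n + 1)) (cocompact ℂ) (nhds 1))
    (m : ℝ → ℂ) (hm : Integrable m) (hms : HasCompactSupport m)
    (M : ℕ → ℂ) (hM : ∀ k, M k = ∫ s : ℝ, (s : ℂ) ^ k * m s)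
    (hvan : ∀ k < n, M k = 0)
    (E : ℂ → ℂ)
    (hE : ∀ z : ℂ, E z = (w z / (2 * (Real.pi : ℂ) * Complex.I)) *
        ∫ s : ℝ, m s / ((s : ℂ) - z)) :
    (fun z : ℂ =>
        E z - (-(M n) / (2 * (Real.pi : ℂ) * Complex.I))
          - (-((P.coeff (2 * n + 1) / 2) * M n + M (n + 1)) /
              (2 * (Real.pi : ℂ) * Complex.I)) / z)
      =O[cocompact ℂ] fun z : ℂ => ‖z‖⁻¹ ^ 2 := by
  obtain ⟨A, hA0, hA⟩ : ∃ A : ℝ, 0 < A ∧ ∀ s, m s ≠ 0 → |s| ≤ A := by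
    obtain ⟨C, hC0, hC⟩ := hms.isCompact.isBounded.exists_pos_norm_le
    exact ⟨C, hC0, fun s hs => hC s (subset_tsupport m hs)⟩
  set p := P.coeff (2 * n + 1) with hp
  have hu := sqrt_expansion p _ hlim <|
    (polynomial_expansion n P hPm hPd).congr' (by
      filter_upwards [eventually_lt_norm R] with z hz
      rw [div_pow, hw2 z hz, ← pow_mul, show (n + 1) * 2 = 2 * n + 2 by ring]) EventuallyEq.rfl
  have hinv := (isBigO_refl (fun z : ℂ => z⁻¹) (cocompact ℂ))
  have hsq := (isBigO_refl (fun z : ℂ => z⁻¹ ^ 2) (cocompact ℂ))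
  have hJ : (fun z : ℂ => z⁻¹ * ∫ s : ℝ, (s : ℂ) ^ (n + 2) / ((s : ℂ) - z) * m s)
      =O[cocompact ℂ] fun z : ℂ => z⁻¹ ^ 2 :=
    (hinv.mul (cauchy_isBigO hA0 hm hA (n + 2))).congr_right fun z => by ring
  have h1 := ((hlim.isBigO_one ℂ).mul hJ).congr_right fun z => one_mul _
  have hlin : Tendsto (fun z : ℂ => M n + M (n + 1) * z⁻¹) (cocompact ℂ)
      (nhds (M n + M (n + 1) * 0)) :=
    (tendsto_inv_cocompact.const_mul (M (n + 1))).const_add (M n)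
  have h2 := (hu.mul (hlin.isBigO_one ℂ)).congr_right fun z => mul_one _
  have h3 := hsq.const_mul_left (p / 2 * M (n + 1))
  have h4 := ((h1.sub h2).sub h3).const_mul_left (2 * (Real.pi : ℂ) * Complex.I)⁻¹
  have h5 := h4.norm_right.congr_right (g₂ := fun z : ℂ => ‖z‖⁻¹ ^ 2) fun z => by
    rw [norm_pow, norm_inv]
  -- By the recurrence, `2πi` times the error is `u J_(n+2)/z - (u - 1 - p/(2z)) (M_n + M_(n+1)/z)`
  -- minus `(p/2) M_(n+1) z⁻²`, with `u = w/z^(n+1)`.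
  refine h5.congr' ?_ EventuallyEq.rfl
  filter_upwards [eventually_lt_norm (2 * A)] with z hz
  have hz0 : z ≠ 0 := norm_pos_iff.mp (by linarith)
  have hrec := fun k => cauchy_succ hm hA0 hA hz k
  simp only [← hM] at hrec
  have hJn : ∀ k ≤ n, ∫ s : ℝ, (s : ℂ) ^ k / ((s : ℂ) - z) * m s
      = z ^ k * ∫ s : ℝ, m s / ((s : ℂ) - z) := by
    intro k
    induction k with
    | zero =>
      intro _
      rw [pow_zero, one_mul]
      refine integral_congr_ae (ae_of_all _ fun s => ?_)
      simp only [pow_zero]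
      ring
    | succ k ih =>
      intro hk
      rw [hrec, hvan k hk, ih (by omega)]
      ring
  rw [hE z, hrec (n + 1), hrec n, hJn n le_rfl]
  generalize (∫ s : ℝ, m s / ((s : ℂ) - z)) = J
  have hpi : (Real.pi : ℂ) ≠ 0 := by exact_mod_cast Real.pi_ne_zero
  have hI := Complex.I_ne_zero
  field_simp
  ring
end

section
/- Let n ∈ ℕ and let τ be a symmetric n × n matrix with complex entries whose entrywise imaginary part, the real matrix (Im τ_{jl}), is positive definite. Then for every z ∈ ℂⁿ, the family N ↦ exp( 2πi·( (1/2)·Nᵀ τ N + Nᵀ z ) ), indexed by N ∈ ℤⁿ, is absolutely summable; in particular the Riemann theta function Θ(z) = ∑_{N ∈ ℤⁿ} exp( 2πi·( (1/2)·Nᵀ τ N + Nᵀ z ) ) is well defined for all z ∈ ℂⁿ. -/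
/-!
The modulus of the term at `N` is `exp (-π Nᵀ(Im τ)N - 2π Nᵀ(Im z))`. A positive definite form
dominates a positive multiple `c ∑ x_j²` of the Euclidean one (`exists_pos_mul_sum_sq_le`, by
compactness of the unit sphere), so the modulus is at most the product over `j` of
`exp (-π (c N_j² - 2 |Im z_j| |N_j|))`. Each factor is the standard majorant of the one-variable
Jacobi theta series and is summable over `ℤ`; a product of summable nonnegative functions of
separate variables is summable over `ℤⁿ` (`summable_pi_prod`).
-/

lemma summable_pi_prod {α : Type*} (n : ℕ) (f : Fin n → α → ℝ) (h0 : ∀ j a, 0 ≤ f j a)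
    (hf : ∀ j, Summable (f j)) : Summable (fun N : Fin n → α => ∏ j, f j (N j)) := by
  induction n with
  | zero => exact Summable.of_finite
  | succ n ih =>
    have h := (hf 0).mul_of_nonneg (ih (fun j => f j.succ) (fun j => h0 _) (fun j => hf _))
      (fun a => h0 0 a) (fun N => Finset.prod_nonneg fun j _ => h0 _ _)
    rw [← (Fin.consEquiv (fun _ : Fin (n + 1) => α)).summable_iff]
    refine h.congr fun p => ?_
    simp [Fin.prod_univ_succ, Fin.consEquiv]

/-- A positive definite real quadratic form is coercive. -/
lemma exists_pos_mul_sum_sq_le {n : ℕ} {A : Matrix (Fin n) (Fin n) ℝ} (hA : A.PosDef) :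
    ∃ c : ℝ, 0 < c ∧ ∀ x : Fin n → ℝ, c * ∑ j, x j ^ 2 ≤ ∑ j, ∑ l, x j * A j l * x l := by
  have hpos : ∀ x : Fin n → ℝ, x ≠ 0 → 0 < ∑ j, ∑ l, x j * A j l * x l := by
    intro x hx
    have := hA.dotProduct_mulVec_pos hx
    simpa [dotProduct, Matrix.mulVec, Finset.mul_sum, mul_assoc] using this
  have hcont : Continuous fun x : EuclideanSpace ℝ (Fin n) => ∑ j, ∑ l, x j * A j l * x l := by
    fun_prop
  have hnorm : ∀ x : Fin n → ℝ, ∑ j, x j ^ 2 = ‖WithLp.toLp 2 x‖ ^ 2 := by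
    intro x
    simp [EuclideanSpace.norm_sq_eq]
  rcases (Metric.sphere (0 : EuclideanSpace ℝ (Fin n)) 1).eq_empty_or_nonempty with he | hne
  · -- The sphere is empty only in dimension zero, where both forms vanish.
    refine ⟨1, one_pos, fun x => ?_⟩
    have hx : x = 0 := by
      by_contra hx
      have hx' : WithLp.toLp 2 x ≠ 0 := by simpa using hx
      have : (‖WithLp.toLp 2 x‖⁻¹ : ℝ) • WithLp.toLp 2 x ∈
          Metric.sphere (0 : EuclideanSpace ℝ (Fin n)) 1 := by
        simp [norm_smul, hx]
      rw [he] at this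
      exact this
    simp [hx]
  · obtain ⟨y, hy, hmin⟩ := (isCompact_sphere (0 : EuclideanSpace ℝ (Fin n)) 1).exists_isMinOn
      hne hcont.continuousOn
    have hy0 : (WithLp.ofLp y) ≠ 0 := by
      intro h
      have : y = 0 := by ext j; simp [h]
      simp [this] at hy
    refine ⟨_, hpos _ hy0, fun x => ?_⟩
    by_cases hx : x = 0
    · simp [hx]
    have hr : 0 < ‖WithLp.toLp 2 x‖ := by simpa using hx
    rw [hnorm]
    set r := ‖WithLp.toLp 2 x‖ with hrdef
    have hmem : (r⁻¹ : ℝ) • WithLp.toLp 2 x ∈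
        Metric.sphere (0 : EuclideanSpace ℝ (Fin n)) 1 := by
      simp [norm_smul, ← hrdef, abs_of_pos hr, hr.ne']
    have h := hmin hmem
    simp only [Set.mem_ofPred_eq, PiLp.smul_apply, smul_eq_mul] at h
    have hs : ∑ j, ∑ l, x j * A j l * x l =
        (∑ j, ∑ l, r⁻¹ * x j * A j l * (r⁻¹ * x l)) * r ^ 2 := by
      simp only [Finset.sum_mul]
      refine Finset.sum_congr rfl fun j _ => Finset.sum_congr rfl fun l _ => ?_
      field_simp
    rw [hs]
    exact mul_le_mul_of_nonneg_right h (by positivity)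


/-- Absolute convergence of the Riemann theta series: for a symmetric `n × n` complex
matrix `τ` whose entrywise imaginary part is positive definite, the series
`Θ(z) = ∑_{N ∈ ℤⁿ} exp(2πi(½ NᵀτN + Nᵀz))` is absolutely summable for every `z ∈ ℂⁿ`. -/
theorem stmt_12 (n : ℕ) (τ : Matrix (Fin n) (Fin n) ℂ) (hsymm : τ.IsSymm)
    (hpos : Matrix.PosDef (Matrix.of fun j l => (τ j l).im)) :
    ∀ z : Fin n → ℂ,
      Summable (fun N : Fin n → ℤ =>
        ‖Complex.exp (2 * (Real.pi : ℂ) * Complex.I *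
            ((1 / 2) * (∑ j, ∑ l, (N j : ℂ) * τ j l * (N l : ℂ)) +
              ∑ j, (N j : ℂ) * z j))‖) := by
  intro z
  obtain ⟨c, hc, hle⟩ := exists_pos_mul_sum_sq_le hpos
  have hsum : ∀ j : Fin n, Summable fun m : ℤ =>
      Real.exp (-Real.pi * (c * (m : ℝ) ^ 2 - 2 * |(z j).im| * |(m : ℝ)|)) := by
    intro j
    simpa using summable_pow_mul_jacobiTheta₂_term_bound |(z j).im| hc 0
  refine Summable.of_nonneg_of_le (fun _ => norm_nonneg _) (fun N => ?_)
    (summable_pi_prod n _ (fun _ _ => (Real.exp_pos _).le) hsum)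
  rw [Complex.norm_exp, ← Real.exp_sum]
  apply Real.exp_le_exp.mpr
  have hQ : (∑ j, ∑ l, (N j : ℂ) * τ j l * (N l : ℂ)).im =
      ∑ j, ∑ l, (N j : ℝ) * (τ j l).im * (N l : ℝ) := by
    simp [Complex.im_sum]
  have hL : (∑ j, (N j : ℂ) * z j).im = ∑ j, (N j : ℝ) * (z j).im := by
    simp [Complex.im_sum]
  have hre : ∀ q w : ℂ, (2 * (Real.pi : ℂ) * Complex.I * ((1 / 2) * q + w)).re =
      -Real.pi * (q.im + 2 * w.im) := by
    intro q w
    have : 2 * (Real.pi : ℂ) * Complex.I * ((1 / 2) * q + w) =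
        (Real.pi : ℂ) * (Complex.I * (q + 2 * w)) := by ring
    rw [this, Complex.re_ofReal_mul, Complex.I_mul_re]
    simp
    ring
  -- With `π` factored out, it remains to bound `Nᵀ(Im τ)N + 2 Nᵀ(Im z)` from below.
  rw [hre, hQ, hL, ← Finset.mul_sum]
  apply mul_le_mul_of_nonpos_left _ (neg_nonpos.mpr Real.pi_pos.le)
  have h1 := hle fun j => (N j : ℝ)
  simp only [Matrix.of_apply] at h1
  have h2 : -∑ j, |(z j).im| * |(N j : ℝ)| ≤ ∑ j, (N j : ℝ) * (z j).im := by
    rw [← Finset.sum_neg_distrib]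
    refine Finset.sum_le_sum fun j _ => ?_
    rw [← abs_mul, mul_comm (N j : ℝ)]
    exact neg_abs_le _
  simp only [Finset.sum_sub_distrib, mul_assoc, ← Finset.mul_sum] at h1 h2 ⊢
  linarith
end

section
/- Let z₀ ∈ ℝ, δ₀ > 0, K ≥ 0, and let θ : ℝ → ℝ be four times differentiable on [z₀ − δ₀, z₀ + δ₀] with |θ⁗(z)| ≤ K there, with θ''(z₀) = 0 and A := θ'''(z₀) > 0; for t > 0 and z set λ = (A·t/8)^{1/3}·(z − z₀) and ϖ = 2·θ'(z₀)·t^{2/3}/A^{1/3}. Then for every M > 0 there exist C > 0 and t₀ ≥ 1 such that for all t ≥ t₀ and all z ∈ [z₀ − δ₀, z₀ + δ₀] with |λ| ≤ M, | exp( i·t·(θ(z) − θ(z₀)) ) − exp( i·( (4/3)·λ³ + ϖ·λ ) ) | ≤ C·t^{−1/3}. -/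
open Set

/-!
The third-order Taylor polynomial of `θ` at `z₀`, whose quadratic term vanishes, is exactly the
Painlevé II model phase: with `s = (At/8)^{1/3}` and `λ = s(z - z₀)` one has
`tA(z - z₀)³/6 = (4/3)λ³` and `tθ'(z₀)(z - z₀) = ϖλ` (`model_phase_eq`). The two phases therefore
differ by `t` times the Lagrange remainder, at most `tK(z - z₀)⁴/24` (`abs_sub_cubic_taylor_le`).
Substituting `z - z₀ = λ/s` and `t = 8s³/A` turns this into `Kλ⁴/(3As)`, which is `O(t^{-1/3})`
for `|λ| ≤ M`. Since `x ↦ e^{ix}` is 1-Lipschitz (`norm_exp_I_sub_le`), the same bound holds for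
the oscillatory factors.
-/

theorem norm_exp_I_sub_le (x y : ℝ) :
    ‖Complex.exp (Complex.I * (x : ℂ)) - Complex.exp (Complex.I * (y : ℂ))‖ ≤ |x - y| := by
  have h : Complex.exp (Complex.I * (x : ℂ)) - Complex.exp (Complex.I * (y : ℂ))
      = Complex.exp (Complex.I * (y : ℂ)) *
        (Complex.exp (Complex.I * ((x - y : ℝ) : ℂ)) - 1) := by
    rw [mul_sub, ← Complex.exp_add, mul_one]
    push_cast
    ring_nf
  rw [h, norm_mul, Complex.norm_exp_I_mul_ofReal, one_mul]
  exact Real.norm_exp_I_mul_ofReal_sub_one_le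

/-- Third-order Taylor estimate about any point of the interval, on either side of it. The derivatives
are taken within the ambient interval `Icc a b`; they agree with those within `uIcc c z`, where
the Lagrange remainder lives, because `f` is `C⁴` on the larger set. -/
theorem abs_sub_cubic_taylor_le {a b c z K : ℝ} (hab : a < b) {f : ℝ → ℝ}
    (hf : ContDiffOn ℝ 4 f (Icc a b)) (hc : c ∈ Icc a b) (hz : z ∈ Icc a b)
    (hK : ∀ y ∈ Icc a b, |iteratedDerivWithin 4 f (Icc a b) y| ≤ K) :
    |f z - (f c + iteratedDerivWithin 1 f (Icc a b) c * (z - c)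
      + iteratedDerivWithin 2 f (Icc a b) c * (z - c) ^ 2 / 2
      + iteratedDerivWithin 3 f (Icc a b) c * (z - c) ^ 3 / 6)| ≤ K * (z - c) ^ 4 / 24 := by
  rcases eq_or_ne c z with rfl | hne
  · simp
  have hsub : uIcc c z ⊆ Icc a b := uIcc_subset_Icc hc hz
  have hu : UniqueDiffOn ℝ (uIcc c z) := uniqueDiffOn_Icc (by simpa [eq_comm] using hne)
  have hf' := hf.mono hsub
  have hcongr : ∀ n : ℕ, n ≤ 4 → ∀ y ∈ uIcc c z,
      iteratedDerivWithin n f (uIcc c z) y = iteratedDerivWithin n f (Icc a b) y := by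
    intro n hn y hy
    rw [iteratedDerivWithin, iteratedDerivWithin, iteratedFDerivWithin_subset hsub hu
      (uniqueDiffOn_Icc hab) (hf.of_le (by exact_mod_cast hn)) hy]
  obtain ⟨y, hy, h⟩ := taylor_mean_remainder_lagrange (n := 3) hne
    (hf'.of_le (by norm_num))
    ((hf'.differentiableOn_iteratedDerivWithin (by norm_num) hu).mono uIoo_subset_uIcc_self)
  have hy' := uIoo_subset_uIcc_self hy
  have hl : c ∈ uIcc c z := left_mem_uIcc
  simp only [taylorWithinEval_succ, taylor_within_zero_eval, smul_eq_mul, zero_add,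
    Nat.reduceAdd] at h
  rw [hcongr 4 le_rfl y hy', hcongr 1 (by norm_num) c hl, hcongr 2 (by norm_num) c hl,
    hcongr 3 (by norm_num) c hl] at h
  norm_num [Nat.factorial] at h
  have e : f z - (f c + iteratedDerivWithin 1 f (Icc a b) c * (z - c)
      + iteratedDerivWithin 2 f (Icc a b) c * (z - c) ^ 2 / 2
      + iteratedDerivWithin 3 f (Icc a b) c * (z - c) ^ 3 / 6)
      = iteratedDerivWithin 4 f (Icc a b) y * (z - c) ^ 4 / 24 := by
    rw [← h, iteratedDerivWithin_one]; ring
  have hp : (0 : ℝ) ≤ (z - c) ^ 4 := by positivity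
  rw [e, abs_div, abs_mul, abs_of_nonneg hp, abs_of_pos (by norm_num : (0 : ℝ) < 24)]
  have := hK y (hsub hy')
  gcongr

theorem cbrt_pow_three {x : ℝ} (hx : 0 ≤ x) : (x ^ ((1 : ℝ) / 3)) ^ 3 = x := by
  rw [← Real.rpow_natCast, ← Real.rpow_mul hx]
  norm_num

theorem cbrt_mul_div_eight {A t : ℝ} (hA : 0 < A) (ht : 0 < t) :
    (A * t / 8) ^ ((1 : ℝ) / 3) = A ^ ((1 : ℝ) / 3) * t ^ ((1 : ℝ) / 3) / 2 := by
  have h8 : (8 : ℝ) ^ ((1 : ℝ) / 3) = 2 := by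
    rw [show (8 : ℝ) = 2 ^ (3 : ℝ) by norm_num, ← Real.rpow_mul (by norm_num)]
    norm_num
  rw [Real.div_rpow (by positivity) (by norm_num), Real.mul_rpow hA.le ht.le, h8]

/-- In the unscaled variable `w = z - z₀`, with `p = θ'(z₀)`, the model phase is `t` times the
cubic Taylor polynomial of the phase without its constant and quadratic terms. -/
theorem model_phase_eq {A t : ℝ} (hA : 0 < A) (ht : 0 < t) (p w : ℝ) :
    (4 / 3) * ((A * t / 8) ^ ((1 : ℝ) / 3) * w) ^ 3
      + (2 * p * t ^ ((2 : ℝ) / 3) / A ^ ((1 : ℝ) / 3)) * ((A * t / 8) ^ ((1 : ℝ) / 3) * w)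
      = t * (p * w + A * w ^ 3 / 6) := by
  have hA' : (0 : ℝ) < A ^ ((1 : ℝ) / 3) := by positivity
  have h1 : t ^ ((2 : ℝ) / 3) * t ^ ((1 : ℝ) / 3) = t := by
    rw [← Real.rpow_add ht]
    norm_num
  rw [mul_pow, cbrt_pow_three (by positivity), cbrt_mul_div_eight hA ht]
  have h2 : (2 * p * t ^ ((2 : ℝ) / 3) / A ^ ((1 : ℝ) / 3)) *
      (A ^ ((1 : ℝ) / 3) * t ^ ((1 : ℝ) / 3) / 2 * w)
      = p * w * (t ^ ((2 : ℝ) / 3) * t ^ ((1 : ℝ) / 3)) := by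
    field_simp
  rw [h2, h1]
  ring

/-- Uniform approximation of the oscillatory factor by the Painlevé II model phase
on the region of bounded scaled variable: with `λ = (At/8)^{1/3}(z − z₀)` and
`ϖ = 2θ'(z₀)t^{2/3}/A^{1/3}`, for every `M > 0` there are `C > 0` and `t₀ ≥ 1` such
that for `t ≥ t₀` and `|λ| ≤ M`,
`|e^{it(θ(z)−θ(z₀))} − e^{i((4/3)λ³ + ϖλ)}| ≤ C·t^{−1/3}`. -/
theorem stmt_16 (z₀ δ₀ K : ℝ) (hδ : 0 < δ₀) (hK : 0 ≤ K) (θ : ℝ → ℝ)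
    (I : Set ℝ) (hI : I = Icc (z₀ - δ₀) (z₀ + δ₀))
    (hθ : ContDiffOn ℝ 4 θ I)
    (hbd : ∀ z ∈ I, |iteratedDerivWithin 4 θ I z| ≤ K)
    (A θ'z₀ : ℝ)
    (hA : A = iteratedDerivWithin 3 θ I z₀)
    (hθ' : θ'z₀ = iteratedDerivWithin 1 θ I z₀)
    (h2 : iteratedDerivWithin 2 θ I z₀ = 0)
    (hApos : 0 < A) :
    ∀ M : ℝ, 0 < M → ∃ C : ℝ, 0 < C ∧ ∃ t₀ : ℝ, 1 ≤ t₀ ∧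
      ∀ t : ℝ, t₀ ≤ t → ∀ z ∈ I,
        |(A * t / 8) ^ ((1 : ℝ) / 3) * (z - z₀)| ≤ M →
        ‖Complex.exp (Complex.I * ((t * (θ z - θ z₀) : ℝ) : ℂ))
            - Complex.exp (Complex.I *
                (((4 / 3) * ((A * t / 8) ^ ((1 : ℝ) / 3) * (z - z₀)) ^ 3
                  + (2 * θ'z₀ * t ^ ((2 : ℝ) / 3) / A ^ ((1 : ℝ) / 3)) *
                      ((A * t / 8) ^ ((1 : ℝ) / 3) * (z - z₀)) : ℝ) : ℂ))‖
          ≤ C * t ^ (-(1 : ℝ) / 3) := by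
  intro M hM
  -- With `s = (At/8)^{1/3}`, the bound `K M⁴ / (3 A s)` has this constant in front of `t^{-1/3}`;
  -- the summand `1` keeps the constant positive when `K = 0`.
  refine ⟨2 * K * M ^ 4 / (3 * A * A ^ ((1 : ℝ) / 3)) + 1, by positivity, 1, le_rfl, ?_⟩
  intro t ht z hz hlam
  have ht0 : 0 < t := by linarith
  refine (norm_exp_I_sub_le _ _).trans ?_
  rw [model_phase_eq hApos ht0]
  subst hI
  have hT := abs_sub_cubic_taylor_le (by linarith) hθ
    (show z₀ ∈ Icc (z₀ - δ₀) (z₀ + δ₀) from ⟨by linarith, by linarith⟩) hz hbd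
  rw [h2, ← hA, ← hθ'] at hT
  have e : t * (θ z - θ z₀) - t * (θ'z₀ * (z - z₀) + A * (z - z₀) ^ 3 / 6)
      = t * (θ z - (θ z₀ + θ'z₀ * (z - z₀) + 0 * (z - z₀) ^ 2 / 2
        + A * (z - z₀) ^ 3 / 6)) := by ring
  rw [e, abs_mul, abs_of_pos ht0]
  have hneg : t ^ (-(1 : ℝ) / 3) = (t ^ ((1 : ℝ) / 3))⁻¹ := by
    rw [neg_div, Real.rpow_neg ht0.le]
  have hs3 : ((A * t / 8) ^ ((1 : ℝ) / 3)) ^ 3 = A * t / 8 := cbrt_pow_three (by positivity)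
  have hs := cbrt_mul_div_eight hApos ht0
  have hs0 : 0 < (A * t / 8) ^ ((1 : ℝ) / 3) := by positivity
  have ha : (0 : ℝ) < A ^ ((1 : ℝ) / 3) := by positivity
  have hr : (0 : ℝ) < t ^ ((1 : ℝ) / 3) := by positivity
  rw [hneg]
  generalize (A * t / 8) ^ ((1 : ℝ) / 3) = s at *
  generalize A ^ ((1 : ℝ) / 3) = a at *
  generalize t ^ ((1 : ℝ) / 3) = r at *
  have hlam4 : (s * (z - z₀)) ^ 4 ≤ M ^ 4 := by
    rw [← (show Even 4 by decide).pow_abs]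
    exact pow_le_pow_left₀ (abs_nonneg _) hlam 4
  have htA : t = 8 * s ^ 3 / A := by
    rw [hs3]
    field_simp
  calc t * |θ z - (θ z₀ + θ'z₀ * (z - z₀) + 0 * (z - z₀) ^ 2 / 2 + A * (z - z₀) ^ 3 / 6)|
      ≤ t * (K * (z - z₀) ^ 4 / 24) := by gcongr
    _ = K * (s * (z - z₀)) ^ 4 / (3 * A * s) := by
        rw [htA]
        field_simp
        ring
    _ ≤ K * M ^ 4 / (3 * A * s) := by gcongr
    _ = 2 * K * M ^ 4 / (3 * A * a) * r⁻¹ := by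
        rw [hs]
        field_simp
    _ ≤ (2 * K * M ^ 4 / (3 * A * a) + 1) * r⁻¹ := by
        gcongr
        linarith
end
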